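/- Let a, b be two distinct symbols and let L₀ = a(aba)*a + ba(aba)*b, i.e. L₀ = {a(aba)^n a : n ≥ 0} ∪ {ba(aba)^n b : n ≥ 0} over the alphabet {a,b}. Then for every linear order ≺ on {a,b}, the language L₀ is not Wheeler with respect to ({a,b},≺). In particular, L₀ is not a generalized Wheeler language. -/

import Mathlib

/-!
Common framework: words over an ordered alphabet, co-lexicographic order,
(partial) DFAs and NFAs, Wheeler automata and Wheeler languages,
following "Ordering regular languages: a danger zone".
-/

namespace WheelerPaper

/-- Strict co-lexicographic order on words: compare the reverses lexicographically. -/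
def Colex {A : Type} [LinearOrder A] (x y : List A) : Prop :=
  List.Lex (· < ·) x.reverse y.reverse

/-- Non-strict co-lexicographic order. -/
def ColexLE {A : Type} [LinearOrder A] (x y : List A) : Prop :=
  Colex x y ∨ x = y

/-- Right context `α⁻¹L` of a word `α` with respect to a language `L`. -/
def rc {A : Type} (L : Set (List A)) (α : List A) : Set (List A) :=
  {γ | α ++ γ ∈ L}

/-- `Pref L`: the set of prefixes of words of `L`. -/
def Pref {A : Type} (L : Set (List A)) : Set (List A) :=
  {α | ∃ β, α ++ β ∈ L}

/-- `wpow γ i` is `γ^i`, the `i`-fold concatenation of the word `γ`. -/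
def wpow {A : Type} (γ : List A) : ℕ → List A
  | 0 => []
  | n + 1 => γ ++ wpow γ n

/-- A DFA with a possibly partial transition function. -/
structure PDFA (A : Type) (Q : Type) where
  init : Q
  trans : Q → A → Option Q
  accept : Q → Prop

/-- Extended (partial) transition function of a `PDFA`. -/
def PDFA.evalFrom {A Q : Type} (M : PDFA A Q) : Q → List A → Option Q
  | q, [] => some q
  | q, a :: w => (M.trans q a).bind fun q' => PDFA.evalFrom M q' w

/-- The language accepted by a `PDFA`. -/
def PDFA.accepts {A Q : Type} (M : PDFA A Q) : Set (List A) :=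
  {w | ∃ q, M.evalFrom M.init w = some q ∧ M.accept q}

/-- A `PDFA` is trim if every state is reachable from the initial state and
every state can reach some accepting state. -/
def PDFA.Trim {A Q : Type} (M : PDFA A Q) : Prop :=
  (∀ q : Q, ∃ α, M.evalFrom M.init α = some q) ∧
  (∀ q : Q, ∃ α q', M.evalFrom q α = some q' ∧ M.accept q')

/-- `r` is a Wheeler order for the DFA `M`: a strict total order on states whose
minimum is the initial state, the initial state has no incoming transitions, and
the two Wheeler conditions hold. -/
def IsWheelerOrder {A Q : Type} [LinearOrder A] (M : PDFA A Q) (r : Q → Q → Prop) : Prop :=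
  IsStrictTotalOrder Q r ∧
  (∀ q : Q, q ≠ M.init → r M.init q) ∧
  (∀ (q : Q) (a : A), M.trans q a ≠ some M.init) ∧
  (∀ (u₁ : Q) (a₁ : A) (v₁ : Q) (u₂ : Q) (a₂ : A) (v₂ : Q),
     M.trans u₁ a₁ = some v₁ → M.trans u₂ a₂ = some v₂ →
     (a₁ < a₂ → r v₁ v₂) ∧ (a₁ = a₂ → r u₁ u₂ → (r v₁ v₂ ∨ v₁ = v₂)))

/-- A language is Wheeler (w.r.t. the given order on the alphabet) if it is
recognized by some Wheeler DFA. -/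
def IsWheelerLang {A : Type} [LinearOrder A] (L : Set (List A)) : Prop :=
  ∃ (n : ℕ) (M : PDFA A (Fin n)) (r : Fin n → Fin n → Prop),
    IsWheelerOrder M r ∧ M.accepts = L

/-- A language is regular if it is recognized by some finite-state (partial) DFA. -/
def IsRegular {A : Type} (L : Set (List A)) : Prop :=
  ∃ (k : ℕ) (M : PDFA A (Fin k)), M.accepts = L

/-- The input-consistent convex refinement `≡^c_L` of the Myhill–Nerode
equivalence: same right context, same last character (or both empty), and every
word of `Pref L` co-lexicographically between the two words has the same right
context. -/
def EquivC {A : Type} [LinearOrder A] (L : Set (List A)) (α β : List A) : Prop :=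
  rc L α = rc L β ∧ α.getLast? = β.getLast? ∧
  ∀ γ ∈ Pref L,
    ((ColexLE α γ ∧ ColexLE γ β) ∨ (ColexLE β γ ∧ ColexLE γ α)) →
    rc L γ = rc L α

/-- An NFA with a single initial state. -/
structure NFA' (A : Type) (Q : Type) where
  init : Q
  trans : Q → A → Set Q
  accept : Q → Prop

/-- One step of an `NFA'` on a set of states. -/
def NFA'.stepSet {A Q : Type} (M : NFA' A Q) (S : Set Q) (a : A) : Set Q :=
  {q | ∃ p ∈ S, q ∈ M.trans p a}

/-- Extended transition function of an `NFA'` on sets of states. -/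
def NFA'.evalFrom {A Q : Type} (M : NFA' A Q) : Set Q → List A → Set Q
  | S, [] => S
  | S, a :: w => NFA'.evalFrom M (M.stepSet S a) w

/-- The language accepted by an `NFA'`. -/
def NFA'.accepts {A Q : Type} (M : NFA' A Q) : Set (List A) :=
  {w | ∃ q ∈ M.evalFrom {M.init} w, M.accept q}

/-- An `NFA'` is trim if every state is reachable from the initial state and
every state can reach some accepting state. -/
def NFA'.Trim {A Q : Type} (M : NFA' A Q) : Prop :=
  (∀ q : Q, ∃ α, q ∈ M.evalFrom {M.init} α) ∧
  (∀ q : Q, ∃ α, ∃ q' ∈ M.evalFrom {q} α, M.accept q')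

/-- `r` is a Wheeler order for the NFA `M`. -/
def IsWheelerNFAOrder {A Q : Type} [LinearOrder A] (M : NFA' A Q) (r : Q → Q → Prop) : Prop :=
  IsStrictTotalOrder Q r ∧
  (∀ q : Q, q ≠ M.init → r M.init q) ∧
  (∀ (q : Q) (a : A), M.init ∉ M.trans q a) ∧
  (∀ (u₁ : Q) (a₁ : A) (v₁ : Q) (u₂ : Q) (a₂ : A) (v₂ : Q),
     v₁ ∈ M.trans u₁ a₁ → v₂ ∈ M.trans u₂ a₂ →
     (a₁ < a₂ → r v₁ v₂) ∧ (a₁ = a₂ → r u₁ u₂ → (r v₁ v₂ ∨ v₁ = v₂)))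

/-- `I` is an interval with respect to the strict order `r`. -/
def IsIntervalRel {Q : Type} (r : Q → Q → Prop) (I : Set Q) : Prop :=
  ∀ x y z : Q, (r x y ∨ x = y) → (r y z ∨ y = z) → x ∈ I → z ∈ I → y ∈ I

/-- The class of star-free languages: built from `∅`, `{ε}` and the singletons
`{a}` by union, concatenation and complement. -/
inductive StarFree {A : Type} : Set (List A) → Prop
  | empty : StarFree ∅
  | eps : StarFree {[]}
  | single (a : A) : StarFree {[a]}
  | union {L₁ L₂ : Set (List A)} : StarFree L₁ → StarFree L₂ → StarFree (L₁ ∪ L₂)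
  | concat {L₁ L₂ : Set (List A)} : StarFree L₁ → StarFree L₂ →
      StarFree {w | ∃ u v, u ∈ L₁ ∧ v ∈ L₂ ∧ w = u ++ v}
  | compl {L : Set (List A)} : StarFree L → StarFree Lᶜ


/-- The language of all words over the sub-alphabet `S`. -/
def wordsOver {A : Type} (S : Set A) : Language A := {w | ∀ x ∈ w, x ∈ S}


section Statement4

theorem evalFrom_append' {A Q : Type} (M : PDFA A Q) (x y : List A) (q : Q) :
    M.evalFrom q (x ++ y) = (M.evalFrom q x).bind fun q' => M.evalFrom q' y := by
  induction x generalizing q with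
  | nil => simp [PDFA.evalFrom]
  | cons c x ih =>
    simp only [List.cons_append, PDFA.evalFrom]
    cases M.trans q c with
    | none => simp
    | some p => simp [ih]

theorem eval_mono {A Q : Type} [LinearOrder A] (M : PDFA A Q) (r : Q → Q → Prop)
    (hr : IsWheelerOrder M r) (x : List A) (p q p' q' : Q) (h : r p q ∨ p = q)
    (hp : M.evalFrom p x = some p') (hq : M.evalFrom q x = some q') : r p' q' ∨ p' = q' := by
  induction x generalizing p q with
  | nil =>
    simp only [PDFA.evalFrom, Option.some.injEq] at hp hq
    subst hp hq
    exact h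
  | cons c x ih =>
    simp only [PDFA.evalFrom, Option.bind_eq_some_iff] at hp hq
    obtain ⟨p1, hp1, hp⟩ := hp
    obtain ⟨q1, hq1, hq⟩ := hq
    refine ih p1 q1 ?_ hp hq
    rcases h with h | h
    · exact (hr.2.2.2 p c p1 q c q1 hp1 hq1).2 rfl h
    · subst h
      rw [hp1] at hq1
      exact Or.inr (Option.some.inj hq1)

theorem suffix_le {A Q : Type} [LinearOrder A] (M : PDFA A Q) (r : Q → Q → Prop)
    (hr : IsWheelerOrder M r) (z x : List A) (p q : Q)
    (hp : M.evalFrom M.init x = some p) (hq : M.evalFrom M.init (z ++ x) = some q) :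
    r p q ∨ p = q := by
  rw [evalFrom_append', Option.bind_eq_some_iff] at hq
  obtain ⟨t, -, hq⟩ := hq
  refine eval_mono M r hr x M.init t p q ?_ hp hq
  by_cases ht : t = M.init
  · exact Or.inr ht.symm
  · exact Or.inl (hr.2.1 t ht)

theorem not_wheeler_aux {A : Type} [LinearOrder A] (a b : A) (hab : a ≠ b)
    (L : Set (List A))
    (hL : L = {w | ∃ n : ℕ, w = [a] ++ wpow [a, b, a] n ++ [a]} ∪
              {w | ∃ n : ℕ, w = [b, a] ++ wpow [a, b, a] n ++ [b]}) :
    ¬ IsWheelerLang L := by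
  rintro ⟨N, M, r, hr, hM⟩
  have hso := hr.1
  have hU : ∀ n, ∃ q, M.evalFrom M.init ([a] ++ wpow [a, b, a] n) = some q ∧
      ∃ t, M.evalFrom q [a] = some t ∧ M.accept t := by
    intro n
    have h : ([a] ++ wpow [a, b, a] n ++ [a]) ∈ M.accepts := by
      rw [hM, hL]; exact Or.inl ⟨n, rfl⟩
    obtain ⟨t, ht, hacc⟩ := h
    rw [evalFrom_append', Option.bind_eq_some_iff] at ht
    obtain ⟨q, h1, h2⟩ := ht
    exact ⟨q, h1, t, h2, hacc⟩
  have hV : ∀ n, ∃ q, M.evalFrom M.init ([b, a] ++ wpow [a, b, a] n) = some q := by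
    intro n
    have h : ([b, a] ++ wpow [a, b, a] n ++ [b]) ∈ M.accepts := by
      rw [hM, hL]; exact Or.inr ⟨n, rfl⟩
    obtain ⟨t, ht, hacc⟩ := h
    rw [evalFrom_append', Option.bind_eq_some_iff] at ht
    obtain ⟨q, h1, h2⟩ := ht
    exact ⟨q, h1⟩
  choose U hU hUa using hU
  choose V hV using hV
  have hne : ∀ m n, U m ≠ V n := by
    intro m n h
    obtain ⟨t, ht, hacc⟩ := hUa m
    have hmem : ([b, a] ++ wpow [a, b, a] n ++ [a]) ∈ M.accepts := by
      refine ⟨t, ?_, hacc⟩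
      rw [evalFrom_append', hV n, ← h]
      exact ht
    rw [hM, hL] at hmem
    rcases hmem with ⟨k, hk⟩ | ⟨k, hk⟩
    · simp only [List.cons_append, List.cons.injEq] at hk
      exact hab hk.1.symm
    · have := (List.append_inj' hk rfl).2
      simp only [List.cons.injEq, and_true] at this
      exact hab this
  have h1 : ∀ n, r (U n) (V n) := fun n =>
    (suffix_le M r hr [b] _ _ _ (hU n) (hV n)).resolve_right (hne n n)
  have h2 : ∀ n, r (V n) (U (n + 1)) := fun n =>
    (suffix_le M r hr [a, a] _ _ _ (hV n) (hU (n + 1))).resolve_right (hne (n + 1) n).symm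
  have h3 : ∀ n, r (U n) (U (n + 1)) := fun n => _root_.trans (h1 n) (h2 n)
  have hinj : Function.Injective U := by
    intro i j hij
    rcases lt_trichotomy i j with h | h | h
    · have := Nat.rel_of_forall_rel_succ_of_lt r h3 h
      rw [hij] at this
      exact absurd this (irrefl _)
    · exact h
    · have := Nat.rel_of_forall_rel_succ_of_lt r h3 h
      rw [hij] at this
      exact absurd this (irrefl _)
  exact not_injective_infinite_finite U hinj

/-- Proposition 2 of the paper: the star-free language
`a(aba)*a + ba(aba)*b` is not Wheeler for any linear order on the binary
alphabet `{a,b}`; in particular it is not a generalized Wheeler language. -/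
theorem statement4 {A : Type} (a b : A) (hab : a ≠ b)
    (hcover : ∀ x : A, x = a ∨ x = b)
    (L : Set (List A))
    (hL : L = {w | ∃ n : ℕ, w = [a] ++ wpow [a, b, a] n ++ [a]} ∪
              {w | ∃ n : ℕ, w = [b, a] ++ wpow [a, b, a] n ++ [b]}) :
    (∀ inst : LinearOrder A, ¬ @IsWheelerLang A inst L) ∧
    ¬ ∃ inst : LinearOrder A, @IsWheelerLang A inst L := by
  have h : ∀ inst : LinearOrder A, ¬ @IsWheelerLang A inst L :=
    fun inst => not_wheeler_aux a b hab L hL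
  exact ⟨h, fun ⟨inst, hi⟩ => h inst hi⟩

end Statement4

end WheelerPaper
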